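/- (Invariance of the dual invariants under Euclidean motions.) Let (v₀¹, v₁¹) be an arc-length parametrized non-cylindrical ruled surface on I, let A ∈ SO(3) (a linear isometry of ℝ³ with determinant 1) and b ∈ ℝ³, and define v₀²(s) = A(v₀¹(s)) and v₁²(s) = A(v₁¹(s)) + b × A(v₀¹(s)). Then (v₀², v₁²) is again an arc-length parametrized non-cylindrical ruled surface on I, and its invariants coincide with those of (v₀¹, v₁¹): κ₁²(s) = κ₁¹(s), τ₀²(s) = τ₀¹(s) and τ₁²(s) = τ₁¹(s) for all s ∈ I. -/

import Mathlib

noncomputable section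
open scoped RealInnerProductSpace

/-- Euclidean 3-space `ℝ³`. -/
abbrev E3 : Type := EuclideanSpace ℝ (Fin 3)

/-- The cross product on `E3`. -/
def cross (u v : E3) : E3 :=
  (WithLp.equiv 2 (Fin 3 → ℝ)).symm
    ![u 1 * v 2 - u 2 * v 1, u 2 * v 0 - u 0 * v 2, u 0 * v 1 - u 1 * v 0]

/-- Determinant of the 3×3 matrix with columns `u`, `v`, `w`. -/
def det3 (u v w : E3) : ℝ :=
  Matrix.det !![u 0, v 0, w 0; u 1, v 1, w 1; u 2, v 2, w 2]

namespace Ruled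

/-- The director curve `e = v₀`. -/
def e (v₀ : ℝ → E3) : ℝ → E3 := v₀

/-- The base curve `r = v₀ × v₁`. -/
def r (v₀ v₁ : ℝ → E3) : ℝ → E3 := fun s => cross (v₀ s) (v₁ s)

/-- The parametrization `F(s,t) = r(s) + t • e(s)` of the ruled surface. -/
def F (v₀ v₁ : ℝ → E3) (s t : ℝ) : E3 := r v₀ v₁ s + t • v₀ s

/-- `n₀ = v₀'`. -/
def n₀ (v₀ : ℝ → E3) : ℝ → E3 := fun s => deriv v₀ s

/-- `κ₁ = ⟪v₀', v₁'⟫`, the ε-part of the dual curvature. -/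
def κ₁ (v₀ v₁ : ℝ → E3) : ℝ → ℝ := fun s => ⟪deriv v₀ s, deriv v₁ s⟫

/-- `n₁ = v₁' - κ₁ • v₀'`. -/
def n₁ (v₀ v₁ : ℝ → E3) : ℝ → E3 := fun s => deriv v₁ s - κ₁ v₀ v₁ s • deriv v₀ s

/-- `t₀ = v₀ × n₀`. -/
def t₀ (v₀ : ℝ → E3) : ℝ → E3 := fun s => cross (v₀ s) (n₀ v₀ s)

/-- `t₁ = v₀ × n₁ + v₁ × n₀`. -/
def t₁ (v₀ v₁ : ℝ → E3) : ℝ → E3 :=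
  fun s => cross (v₀ s) (n₁ v₀ v₁ s) + cross (v₁ s) (n₀ v₀ s)

/-- `τ₀ = ⟪n₀', t₀⟫`, the real part of the dual torsion. -/
def τ₀ (v₀ : ℝ → E3) : ℝ → ℝ := fun s => ⟪deriv (n₀ v₀) s, t₀ v₀ s⟫

/-- `τ₁ = ⟪n₀', t₁⟫ + ⟪n₁', t₀⟫`, the ε-part of the dual torsion. -/
def τ₁ (v₀ v₁ : ℝ → E3) : ℝ → ℝ :=
  fun s => ⟪deriv (n₀ v₀) s, t₁ v₀ v₁ s⟫ + ⟪deriv (n₁ v₀ v₁) s, t₀ v₀ s⟫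

/-- The striction curve `σ(s) = r(s) - ⟪r'(s), e'(s)⟫ • e(s)`. -/
def strict (v₀ v₁ : ℝ → E3) : ℝ → E3 :=
  fun s => r v₀ v₁ s - ⟪deriv (r v₀ v₁) s, deriv (e v₀) s⟫ • e v₀ s

end Ruled

open Ruled

theorem inner3 (u v : E3) : ⟪u, v⟫ = u 0 * v 0 + u 1 * v 1 + u 2 * v 2 := by
  simp [PiLp.inner_apply, Fin.sum_univ_three]; ring

theorem cross_0 (u v : E3) : cross u v 0 = u 1 * v 2 - u 2 * v 1 := rfl
theorem cross_1 (u v : E3) : cross u v 1 = u 2 * v 0 - u 0 * v 2 := rfl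
theorem cross_2 (u v : E3) : cross u v 2 = u 0 * v 1 - u 1 * v 0 := rfl

theorem basis_det_eq (u v w : E3) :
    (EuclideanSpace.basisFun (Fin 3) ℝ).toBasis.det ![u, v, w] = ⟪cross u v, w⟫ := by
  rw [Module.Basis.det_apply, Matrix.det_fin_three, inner3, cross_0, cross_1, cross_2]
  simp [Module.Basis.toMatrix_apply]
  ring

theorem cross_map (A : E3 ≃ₗᵢ[ℝ] E3)
    (hA : LinearMap.det (A.toLinearEquiv : E3 →ₗ[ℝ] E3) = 1) (u v : E3) :
    cross (A u) (A v) = A (cross u v) := by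
  refine ext_inner_right ℝ fun w => ?_
  obtain ⟨w, rfl⟩ := A.surjective w
  rw [A.inner_map_map, ← basis_det_eq, ← basis_det_eq]
  have h := Module.Basis.det_comp (EuclideanSpace.basisFun (Fin 3) ℝ).toBasis
    (A.toLinearEquiv : E3 →ₗ[ℝ] E3) ![u, v, w]
  rw [hA, one_mul] at h
  rw [← h]
  congr 1
  ext i : 1
  fin_cases i <;> rfl

/-- Cross product with a fixed vector, as a linear map. -/
def crossL (b : E3) : E3 →L[ℝ] E3 :=
  LinearMap.toContinuousLinearMap
    { toFun := cross b
      map_add' := by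
        intro x y; ext i; fin_cases i <;> simp [cross] <;> ring
      map_smul' := by
        intro c x; ext i; fin_cases i <;> simp [cross] <;> ring }

theorem crossL_apply (b u : E3) : crossL b u = cross b u := rfl

theorem inner_cross_self (b u : E3) : ⟪u, cross b u⟫ = 0 := by
  rw [inner3, cross_0, cross_1, cross_2]; ring

theorem inner_cross_skew (b u v : E3) : ⟪u, cross b v⟫ + ⟪cross b u, v⟫ = 0 := by
  simp only [inner3, cross_0, cross_1, cross_2]; ring

theorem cross_jacobi (b v₀ v₁ n₀ n₁ : E3) :
    cross v₀ (n₁ + cross b n₀) + cross (v₁ + cross b v₀) n₀ =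
      (cross v₀ n₁ + cross v₁ n₀) + cross b (cross v₀ n₀) := by
  ext i; fin_cases i <;> simp [cross] <;> ring

/-- Invariance of the dual invariants under Euclidean motions: if `w₀ = A ∘ v₀` and
`w₁ = A ∘ v₁ + b × (A ∘ v₀)` for `A ∈ SO(3)` and `b ∈ ℝ³`, then `(w₀, w₁)` is again an
arc-length parametrized non-cylindrical ruled surface with the same invariants. -/
theorem dual_invariants_euclidean_invariant
    (I : Set ℝ) (v₀ v₁ w₀ w₁ : ℝ → E3)
    (hI : IsOpen I) (hI' : I.OrdConnected)
    (hv₀ : ContDiffOn ℝ (⊤ : ℕ∞) v₀ I) (hv₁ : ContDiffOn ℝ (⊤ : ℕ∞) v₁ I)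
    (hunit : ∀ s ∈ I, ‖v₀ s‖ = 1) (horth : ∀ s ∈ I, ⟪v₀ s, v₁ s⟫ = 0)
    (harc : ∀ s ∈ I, ‖deriv v₀ s‖ = 1)
    (A : E3 ≃ₗᵢ[ℝ] E3) (hA : LinearMap.det (A.toLinearEquiv : E3 →ₗ[ℝ] E3) = 1) (b : E3)
    (hw₀ : ∀ s, w₀ s = A (v₀ s))
    (hw₁ : ∀ s, w₁ s = A (v₁ s) + cross b (A (v₀ s))) :
    (ContDiffOn ℝ (⊤ : ℕ∞) w₀ I ∧ ContDiffOn ℝ (⊤ : ℕ∞) w₁ I ∧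
      (∀ s ∈ I, ‖w₀ s‖ = 1) ∧ (∀ s ∈ I, ⟪w₀ s, w₁ s⟫ = 0) ∧
      (∀ s ∈ I, ‖deriv w₀ s‖ = 1)) ∧
    ∀ s ∈ I,
      κ₁ w₀ w₁ s = κ₁ v₀ v₁ s ∧ τ₀ w₀ s = τ₀ v₀ s ∧ τ₁ w₀ w₁ s = τ₁ v₀ v₁ s := by
  obtain rfl : w₀ = fun s => A (v₀ s) := funext hw₀
  obtain rfl : w₁ = fun s => A (v₁ s) + cross b (A (v₀ s)) := funext hw₁
  clear hw₀ hw₁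
  let L : E3 →L[ℝ] E3 := (A.toContinuousLinearEquiv : E3 →L[ℝ] E3)
  have hL : ∀ x, L x = A x := fun _ => rfl
  have dA : ∀ (f : ℝ → E3) (s : ℝ), DifferentiableAt ℝ f s →
      deriv (fun s => A (f s)) s = A (deriv f s) := fun f s hf =>
    (L.hasFDerivAt.comp_hasDerivAt s hf.hasDerivAt).deriv
  have dAB : ∀ (f g : ℝ → E3) (s : ℝ), DifferentiableAt ℝ f s → DifferentiableAt ℝ g s →
      deriv (fun s => A (f s) + cross b (A (g s))) s
        = A (deriv f s) + cross b (A (deriv g s)) := fun f g s hf hg =>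
    ((L.hasFDerivAt.comp_hasDerivAt s hf.hasDerivAt).add
      (((crossL b).comp L).hasFDerivAt.comp_hasDerivAt s hg.hasDerivAt)).deriv
  have h0 : ∀ s ∈ I, DifferentiableAt ℝ v₀ s := fun s hs =>
    (hv₀.contDiffAt (hI.mem_nhds hs)).differentiableAt (by simp)
  have h1 : ∀ s ∈ I, DifferentiableAt ℝ v₁ s := fun s hs =>
    (hv₁.contDiffAt (hI.mem_nhds hs)).differentiableAt (by simp)
  have c0 : ContDiffOn ℝ (⊤ : ℕ∞) (deriv v₀) I := hv₀.deriv_of_isOpen hI (by simp)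
  have c1 : ContDiffOn ℝ (⊤ : ℕ∞) (deriv v₁) I := hv₁.deriv_of_isOpen hI (by simp)
  have h0' : ∀ s ∈ I, DifferentiableAt ℝ (deriv v₀) s := fun s hs =>
    (c0.contDiffAt (hI.mem_nhds hs)).differentiableAt (by simp)
  have h1' : ∀ s ∈ I, DifferentiableAt ℝ (deriv v₁) s := fun s hs =>
    (c1.contDiffAt (hI.mem_nhds hs)).differentiableAt (by simp)
  have hn1 : ∀ s ∈ I, DifferentiableAt ℝ (n₁ v₀ v₁) s := fun s hs =>
    (h1' s hs).sub (((h0' s hs).inner ℝ (h1' s hs)).smul (h0' s hs))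
  have k : ∀ s ∈ I, κ₁ (fun s => A (v₀ s)) (fun s => A (v₁ s) + cross b (A (v₀ s))) s
      = κ₁ v₀ v₁ s := by
    intro s hs
    simp only [κ₁]
    rw [dA _ _ (h0 s hs), dAB _ _ _ (h1 s hs) (h0 s hs), inner_add_right, inner_cross_self,
      A.inner_map_map, add_zero]
  have e0 : ∀ s ∈ I, n₀ (fun s => A (v₀ s)) s = A (n₀ v₀ s) := fun s hs => dA _ _ (h0 s hs)
  have e1 : ∀ s ∈ I, n₁ (fun s => A (v₀ s)) (fun s => A (v₁ s) + cross b (A (v₀ s))) s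
      = A (n₁ v₀ v₁ s) + cross b (A (n₀ v₀ s)) := by
    intro s hs
    simp only [n₁, n₀]
    rw [k s hs, dA _ _ (h0 s hs), dAB _ _ _ (h1 s hs) (h0 s hs), map_sub, map_smul]
    abel
  have d0 : ∀ s ∈ I, deriv (n₀ (fun s => A (v₀ s))) s = A (deriv (n₀ v₀) s) := by
    intro s hs
    rw [← dA (n₀ v₀) s (h0' s hs : DifferentiableAt ℝ (n₀ v₀) s)]
    exact Filter.EventuallyEq.deriv_eq (Filter.eventually_of_mem (hI.mem_nhds hs) e0)
  have d1 : ∀ s ∈ I,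
      deriv (n₁ (fun s => A (v₀ s)) (fun s => A (v₁ s) + cross b (A (v₀ s)))) s
      = A (deriv (n₁ v₀ v₁) s) + cross b (A (deriv (n₀ v₀) s)) := by
    intro s hs
    rw [← dAB (n₁ v₀ v₁) (n₀ v₀) s (hn1 s hs) (h0' s hs : DifferentiableAt ℝ (n₀ v₀) s)]
    exact Filter.EventuallyEq.deriv_eq (Filter.eventually_of_mem (hI.mem_nhds hs) e1)
  have et0 : ∀ s ∈ I, t₀ (fun s => A (v₀ s)) s = A (t₀ v₀ s) := by
    intro s hs
    simp only [t₀]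
    rw [e0 s hs, cross_map A hA]
  have et1 : ∀ s ∈ I, t₁ (fun s => A (v₀ s)) (fun s => A (v₁ s) + cross b (A (v₀ s))) s
      = A (t₁ v₀ v₁ s) + cross b (A (t₀ v₀ s)) := by
    intro s hs
    simp only [t₁, t₀]
    rw [e0 s hs, e1 s hs, cross_jacobi, cross_map A hA, cross_map A hA, cross_map A hA, map_add]
  refine ⟨⟨L.contDiff.comp_contDiffOn hv₀, (L.contDiff.comp_contDiffOn hv₁).add
    (((crossL b).comp L).contDiff.comp_contDiffOn hv₀), ?_, ?_, ?_⟩, ?_⟩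
  · intro s hs
    simpa using hunit s hs
  · intro s hs
    simp only [inner_add_right, inner_cross_self, A.inner_map_map, horth s hs, add_zero]
  · intro s hs
    rw [dA _ _ (h0 s hs), A.norm_map, harc s hs]
  · intro s hs
    refine ⟨k s hs, ?_, ?_⟩
    · simp only [τ₀]
      rw [d0 s hs, et0 s hs, A.inner_map_map]
    · simp only [τ₁]
      rw [d0 s hs, et0 s hs, d1 s hs, et1 s hs, inner_add_right, inner_add_left,
        A.inner_map_map, A.inner_map_map]
      linarith [inner_cross_skew b (A (deriv (n₀ v₀) s)) (A (t₀ v₀ s))]
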